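/- For every instance of interval selection with unit weights, every prediction assignment, and every maximum-cardinality feasible set OPT, the solution produced by algorithm Revoke-Unit satisfies ALG ≥ OPT − η, where η is the total prediction error relative to OPT. -/

import Mathlib

attribute [local instance] Classical.propDecidable

noncomputable section

/-- An interval `I = (s, f)` with `s < f`, occupying `[s, f)`. -/
structure Ivl where
  s : ℝ
  f : ℝ
  lt : s < f

namespace Ivl

/-- The set of points occupied by an interval: the half-open set `[s, f)`. -/
def occ (I : Ivl) : Set ℝ := Set.Ico I.s I.f

/-- The length of an interval, `f - s` (also its proportional weight). -/
def len (I : Ivl) : ℝ := I.f - I.s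

end Ivl

/-- Two intervals conflict if their occupied sets intersect. -/
def Conflict (I J : Ivl) : Prop := (I.occ ∩ J.occ).Nonempty

/-- A set of intervals is feasible if its elements are pairwise disjoint. -/
def Feasible (S : Finset Ivl) : Prop :=
  ∀ I ∈ S, ∀ J ∈ S, I ≠ J → ¬ Conflict I J

/-- `opt` is a maximum-cardinality feasible subset of the instance's intervals. -/
def IsMaxCardOpt (inst : List Ivl) (opt : Finset Ivl) : Prop :=
  (∀ I ∈ opt, I ∈ inst) ∧ Feasible opt ∧
    ∀ T : Finset Ivl, (∀ I ∈ T, I ∈ inst) → Feasible T → T.card ≤ opt.card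

/-- The prediction error introduced by interval `I`, relative to `opt`,
with weight function `w`. -/
def err (w : Ivl → ℝ) (opt : Finset Ivl) (Prd : Ivl → Bool) (I : Ivl) : ℝ :=
  if (Prd I = true ↔ I ∈ opt) then 0
  else if I ∈ opt then w I
  else (∑ J ∈ opt.filter (fun J => Conflict J I), w J) - w I

/-- The total prediction error of the instance relative to `opt`. -/
def totalErr (w : Ivl → ℝ) (opt : Finset Ivl) (Prd : Ivl → Bool)
    (inst : List Ivl) : ℝ :=
  (inst.map (err w opt Prd)).sum

/-- A conflict is partial if neither occupied set contains the other. -/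
def PartialConflict (I J : Ivl) : Prop :=
  Conflict I J ∧ ¬ I.occ ⊆ J.occ ∧ ¬ J.occ ⊆ I.occ

/-- One step of algorithm `Revoke-Unit` on state `(S, M)` (solution, marked)
upon the arrival of `I`. -/
def revokeUnitStep (Prd : Ivl → Bool) (st : Finset Ivl × Finset Ivl)
    (I : Ivl) : Finset Ivl × Finset Ivl :=
  let S := st.1
  let M := st.2
  let Is := S.filter (fun J => Conflict I J)
  if Is = ∅ then
    (insert I S, M)
  else if ∃ I', Is = {I'} ∧ I.occ ⊂ I'.occ then
    (insert I (S \ Is), if Is ∩ M = ∅ then M else insert I M)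
  else if (∀ J ∈ Is, PartialConflict I J) ∧ Prd I = true ∧ Is ∩ M = ∅ then
    (insert I (S \ Is), insert I M)
  else
    st

/-- The solution produced by algorithm `Revoke-Unit` on the instance `inst`
with predictions `Prd`. -/
def revokeUnit (Prd : Ivl → Bool) (inst : List Ivl) : Finset Ivl :=
  (inst.foldl (revokeUnitStep Prd) (∅, ∅)).1

/-!
A marked solution interval descends, by nested replacements, from a *root*: an interval that was
accepted because it was predicted to be optimal. Every optimal interval that was correctly predicted
and has arrived stays *covered*: either it contains a solution interval, or it conflicts with the
root of a marked solution interval, that root lying outside the optimum. If `F` is the set of these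
wrongly predicted roots, the intervals of the optimum conflicting with some `x ∈ F` number at most
`∑ x ∈ F, (err x + 1)`, while the other covered ones contain distinct solution intervals that do not
descend from `F`; the `+ 1` is paid for by the descendants of `F`. The remaining optimal intervals
are the false negatives, each of error `1`. Maximality of the optimum makes every error nonnegative,
so the errors of all other intervals can only increase the total.
-/

theorem Conflict.symm {I J : Ivl} (h : Conflict I J) : Conflict J I := by
  rwa [Conflict, Set.inter_comm]

theorem Conflict.refl (I : Ivl) : Conflict I I :=
  ⟨I.s, Set.left_mem_Ico.2 I.lt, Set.left_mem_Ico.2 I.lt⟩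

theorem Conflict.mono {I I' J J' : Ivl} (h : Conflict I J) (hI : I.occ ⊆ I'.occ)
    (hJ : J.occ ⊆ J'.occ) : Conflict I' J' :=
  Set.Nonempty.mono (Set.inter_subset_inter hI hJ) h

namespace Feasible

variable {S T : Finset Ivl} {I K : Ivl}

theorem eq_of_conflict (hS : Feasible S) (hI : I ∈ S) (hK : K ∈ S) (h : Conflict I K) : I = K :=
  by_contra fun hne => hS I hI K hK hne h

theorem mono (hS : Feasible S) (hTS : T ⊆ S) : Feasible T :=
  fun I hI J hJ => hS I (hTS hI) J (hTS hJ)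

protected theorem insert (hS : Feasible S) (hI : ∀ J ∈ S, ¬ Conflict I J) :
    Feasible (insert I S) := by
  intro A hA B hB hne hAB
  rw [Finset.mem_insert] at hA hB
  rcases hA with rfl | hA <;> rcases hB with rfl | hB
  · exact hne rfl
  · exact hI B hB hAB
  · exact hI A hA hAB.symm
  · exact hS A hA B hB hne hAB

theorem filter_conflict_eq_singleton (hS : Feasible S) (hK : K ∈ S) (hIK : I.occ ⊆ K.occ) :
    S.filter (fun J => Conflict I J) = {K} := by
  ext L
  rw [Finset.mem_filter, Finset.mem_singleton]
  constructor
  · rintro ⟨hL, hIL⟩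
    exact (hS.eq_of_conflict hK hL (hIL.mono hIK subset_rfl)).symm
  · rintro rfl
    exact ⟨hK, (Conflict.refl I).mono subset_rfl hIK⟩

theorem card_le_card_of_forall_exists_subset (hT : Feasible T)
    (h : ∀ J ∈ T, ∃ K ∈ S, K.occ ⊆ J.occ) : T.card ≤ S.card := by
  refine Finset.card_le_card_of_forall_subsingleton (fun J K => K.occ ⊆ J.occ) h ?_
  rintro K - J ⟨hJ, hKJ⟩ J' ⟨hJ', hKJ'⟩
  exact hT.eq_of_conflict hJ hJ' ((Conflict.refl K).mono hKJ hKJ')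

end Feasible

/-- The solution obtained from `S` by revoking all intervals conflicting with `I` and then
accepting `I`. -/
def accept (S : Finset Ivl) (I : Ivl) : Finset Ivl :=
  insert I (S \ S.filter (fun J => Conflict I J))

theorem mem_accept {S : Finset Ivl} {I K : Ivl} :
    K ∈ accept S I ↔ K = I ∨ K ∈ S ∧ ¬ Conflict I K := by
  simp only [accept, Finset.mem_insert, Finset.mem_sdiff, Finset.mem_filter]
  tauto

theorem Feasible.accept {S : Finset Ivl} (hS : Feasible S) (I : Ivl) : Feasible (accept S I) :=
  (hS.mono Finset.sdiff_subset).insert fun _ hJ hIJ =>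
    (Finset.mem_sdiff.1 hJ).2 (Finset.mem_filter.2 ⟨(Finset.mem_sdiff.1 hJ).1, hIJ⟩)

/-- `r` assigns to each marked interval a root: an interval of `A` containing it that was predicted
to be optimal. In the analysis, `A` is the set of intervals that have arrived, and the root of `m`
is the interval whose prediction caused the mark that `m` inherited. -/
def IsRootMap (Prd : Ivl → Bool) (A M : Finset Ivl) (r : Ivl → Ivl) : Prop :=
  ∀ m ∈ M, r m ∈ A ∧ m.occ ⊆ (r m).occ ∧ Prd (r m) = true

/-- A solution interval `K` covers `J` if it lies inside `J`, or if it is marked and its root is a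
false positive conflicting with `J`. -/
def Covers (opt M : Finset Ivl) (r : Ivl → Ivl) (K J : Ivl) : Prop :=
  K.occ ⊆ J.occ ∨ K ∈ M ∧ r K ∉ opt ∧ Conflict J (r K)

/-- The invariant of `Revoke-Unit` in state `(S, M)` once the intervals of `A` have arrived, `r`
being the map from marked intervals to their roots. -/
structure RevokeInvariant (opt : Finset Ivl) (Prd : Ivl → Bool) (A S M : Finset Ivl)
    (r : Ivl → Ivl) : Prop where
  feasible : Feasible S
  isRootMap : IsRootMap Prd A M r
  covered : ∀ J ∈ A, J ∈ opt → Prd J = true → ∃ K ∈ S, Covers opt M r K J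

theorem IsRootMap.mono {Prd : Ivl → Bool} {A A' M : Finset Ivl} {r : Ivl → Ivl}
    (h : IsRootMap Prd A M r) (hA : A ⊆ A') : IsRootMap Prd A' M r :=
  fun m hm => (h m hm).imp_left (hA ·)

theorem IsRootMap.insert_update {Prd : Ivl → Bool} {A M : Finset Ivl} {r : Ivl → Ivl} {I x : Ivl}
    (h : IsRootMap Prd A M r) (hx : x ∈ A) (hIx : I.occ ⊆ x.occ) (hp : Prd x = true) :
    IsRootMap Prd A (insert I M) (Function.update r I x) := by
  intro m hm
  by_cases hmI : m = I
  · subst hmI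
    rw [Function.update_self]
    exact ⟨hx, hIx, hp⟩
  · rw [Function.update_of_ne hmI]
    exact h m (Finset.mem_of_mem_insert_of_ne hm hmI)

theorem Covers.insert_update {opt M : Finset Ivl} {r : Ivl → Ivl} {I J K : Ivl}
    (h : Covers opt M r K J) (hK : K ≠ I) (x : Ivl) :
    Covers opt (insert I M) (Function.update r I x) K J := by
  rw [Covers, Function.update_of_ne hK]
  exact h.imp_right (And.imp_left (Finset.mem_insert_of_mem ·))

namespace RevokeInvariant

variable {opt : Finset Ivl} {Prd : Ivl → Bool} {A S M : Finset Ivl} {r : Ivl → Ivl} {I : Ivl}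

theorem accept_of_covers {M' : Finset Ivl} {r' : Ivl → Ivl} (h : RevokeInvariant opt Prd A S M r)
    (hroot : IsRootMap Prd (insert I A) M' r')
    (hrevoked : ∀ K ∈ S, Conflict I K → ∀ J ∈ opt, Covers opt M r K J → Covers opt M' r' I J)
    (hkept : ∀ K ∈ S, ¬ Conflict I K → ∀ J ∈ opt, Covers opt M r K J → Covers opt M' r' K J) :
    RevokeInvariant opt Prd (insert I A) (accept S I) M' r' where
  feasible := h.feasible.accept I
  isRootMap := hroot
  covered J hJA hJ hp := by
    obtain rfl | hJA := Finset.mem_insert.1 hJA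
    · exact ⟨J, mem_accept.2 (.inl rfl), .inl subset_rfl⟩
    obtain ⟨K, hK, hKJ⟩ := h.covered J hJA hJ hp
    by_cases hIK : Conflict I K
    · exact ⟨I, mem_accept.2 (.inl rfl), hrevoked K hK hIK J hJ hKJ⟩
    · exact ⟨K, mem_accept.2 (.inr ⟨hK, hIK⟩), hkept K hK hIK J hJ hKJ⟩

theorem accept_of_unmarked (h : RevokeInvariant opt Prd A S M r)
    (hI : ∀ K ∈ S, Conflict I K → I.occ ⊆ K.occ ∧ K ∉ M) :
    RevokeInvariant opt Prd (insert I A) (accept S I) M r := by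
  refine h.accept_of_covers (h.isRootMap.mono (Finset.subset_insert I A)) ?_
    fun _ _ _ _ _ => id
  rintro K hK hIK J - (hKJ | ⟨hKM, -⟩)
  · exact .inl ((hI K hK hIK).1.trans hKJ)
  · exact absurd hKM (hI K hK hIK).2

theorem accept_of_marked {I' : Ivl} (h : RevokeInvariant opt Prd A S M r) (hI'M : I' ∈ M)
    (hII' : I.occ ⊆ I'.occ) (hI : ∀ K ∈ S, Conflict I K → K = I') :
    RevokeInvariant opt Prd (insert I A) (accept S I) (insert I M)
      (Function.update r I (r I')) := by
  obtain ⟨hr, hI'r, hp⟩ := h.isRootMap I' hI'M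
  refine h.accept_of_covers
    ((h.isRootMap.mono (Finset.subset_insert I A)).insert_update
      (Finset.mem_insert_of_mem hr) (hII'.trans hI'r) hp) ?_ ?_
  · rintro K hK hIK J - hKJ
    obtain rfl := hI K hK hIK
    rw [Covers, Function.update_self]
    exact hKJ.imp hII'.trans (And.imp_left fun _ => Finset.mem_insert_self I M)
  · rintro K - hIK J - hKJ
    exact hKJ.insert_update (fun hKI => hIK (hKI ▸ Conflict.refl K)) _

theorem accept_of_predicted (hopt : Feasible opt) (h : RevokeInvariant opt Prd A S M r)
    (hp : Prd I = true) (hI : ∀ K ∈ S, Conflict I K → K ∉ M) :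
    RevokeInvariant opt Prd (insert I A) (accept S I) (insert I M) (Function.update r I I) := by
  refine h.accept_of_covers
    ((h.isRootMap.mono (Finset.subset_insert I A)).insert_update
      (Finset.mem_insert_self I A) subset_rfl hp) ?_ ?_
  · rintro K hK hIK J hJ (hKJ | ⟨hKM, -⟩)
    · have hJI : Conflict J I := hIK.symm.mono hKJ subset_rfl
      rw [Covers, Function.update_self]
      by_cases hIo : I ∈ opt
      · exact .inl (hopt.eq_of_conflict hJ hIo hJI ▸ subset_rfl)
      · exact .inr ⟨Finset.mem_insert_self I M, hIo, hJI⟩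
    · exact absurd hKM (hI K hK hIK)
  · rintro K - hIK J - hKJ
    exact hKJ.insert_update (fun hKI => hIK (hKI ▸ Conflict.refl K)) _

theorem reject (hopt : Feasible opt) (h : RevokeInvariant opt Prd A S M r)
    (hI : Prd I = true → ∃ K ∈ S, Conflict I K ∧ (K.occ ⊆ I.occ ∨ K ∈ M)) :
    RevokeInvariant opt Prd (insert I A) S M r where
  feasible := h.feasible
  isRootMap := h.isRootMap.mono (Finset.subset_insert I A)
  covered J hJA hJ hp := by
    obtain rfl | hJA := Finset.mem_insert.1 hJA
    · obtain ⟨K, hK, hJK, hKJ | hKM⟩ := hI hp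
      · exact ⟨K, hK, .inl hKJ⟩
      · have hKr : K.occ ⊆ (r K).occ := (h.isRootMap K hKM).2.1
        have hJr : Conflict J (r K) := hJK.mono subset_rfl hKr
        refine ⟨K, hK, ?_⟩
        by_cases hro : r K ∈ opt
        · exact .inl (hopt.eq_of_conflict hJ hro hJr ▸ hKr)
        · exact .inr ⟨hKM, hro, hJr⟩
    · exact h.covered J hJA hJ hp

end RevokeInvariant

theorem exists_conflict_subset_or_marked_of_rejected {S M : Finset Ivl} {I : Ivl}
    (hS : Feasible S)
    (hnested : ¬ ∃ I', S.filter (fun J => Conflict I J) = {I'} ∧ I.occ ⊂ I'.occ)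
    (hpartial : ¬ ((∀ J ∈ S.filter (fun J => Conflict I J), PartialConflict I J) ∧
      S.filter (fun J => Conflict I J) ∩ M = ∅)) :
    ∃ K ∈ S, Conflict I K ∧ (K.occ ⊆ I.occ ∨ K ∈ M) := by
  by_contra! hno
  refine hpartial ⟨fun K hK => ?_, ?_⟩
  · obtain ⟨hK, hIK⟩ := Finset.mem_filter.1 hK
    have hKI : ¬ K.occ ⊆ I.occ := (hno K hK hIK).1
    exact ⟨hIK, fun hsub => hnested ⟨K, hS.filter_conflict_eq_singleton hK hsub, hsub, hKI⟩, hKI⟩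
  · refine Finset.eq_empty_of_forall_notMem fun K hK => ?_
    obtain ⟨hK, hKM⟩ := Finset.mem_inter.1 hK
    exact (hno K (Finset.mem_filter.1 hK).1 (Finset.mem_filter.1 hK).2).2 hKM

theorem RevokeInvariant.exists_revokeUnitStep {opt : Finset Ivl} {Prd : Ivl → Bool}
    {A S M : Finset Ivl} {r : Ivl → Ivl} (hopt : Feasible opt)
    (h : RevokeInvariant opt Prd A S M r) (I : Ivl) :
    ∃ r', RevokeInvariant opt Prd (insert I A) (revokeUnitStep Prd (S, M) I).1
      (revokeUnitStep Prd (S, M) I).2 r' := by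
  have hunmarked (hM : S.filter (fun J => Conflict I J) ∩ M = ∅) :
      ∀ K ∈ S, Conflict I K → K ∉ M := fun K hK hIK =>
    Finset.disjoint_left.1 (Finset.disjoint_iff_inter_eq_empty.2 hM)
      (Finset.mem_filter.2 ⟨hK, hIK⟩)
  unfold revokeUnitStep
  dsimp only
  split_ifs with hfree hnested hM hpred
  · have hS : insert I S = accept S I := by rw [accept, hfree, Finset.sdiff_empty]
    rw [hS]
    exact ⟨r, h.accept_of_unmarked fun K hK hIK =>
      absurd hIK (Finset.filter_eq_empty_iff.1 hfree hK)⟩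
  · obtain ⟨I', hI', hsub⟩ := hnested
    refine ⟨r, h.accept_of_unmarked fun K hK hIK => ⟨?_, hunmarked hM K hK hIK⟩⟩
    obtain rfl := Finset.mem_singleton.1 (hI' ▸ Finset.mem_filter.2 ⟨hK, hIK⟩)
    exact hsub.subset
  · obtain ⟨I', hI', hsub⟩ := hnested
    have hI'M : I' ∈ M := by
      rw [hI'] at hM
      exact by_contra fun hI'M => hM (Finset.singleton_inter_of_notMem hI'M)
    exact ⟨_, h.accept_of_marked hI'M hsub.subset fun K hK hIK =>
      Finset.mem_singleton.1 (hI' ▸ Finset.mem_filter.2 ⟨hK, hIK⟩)⟩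
  · exact ⟨_, h.accept_of_predicted hopt hpred.2.1 (hunmarked hpred.2.2)⟩
  · exact ⟨r, h.reject hopt fun hp =>
      exists_conflict_subset_or_marked_of_rejected h.feasible hnested
        fun hpartial => hpred ⟨hpartial.1, hp, hpartial.2⟩⟩

theorem exists_revokeInvariant {opt : Finset Ivl} (hopt : Feasible opt) (Prd : Ivl → Bool)
    (inst : List Ivl) :
    ∃ M r, RevokeInvariant opt Prd inst.toFinset (revokeUnit Prd inst) M r := by
  suffices h : ∃ r, RevokeInvariant opt Prd inst.toFinset
      (inst.foldl (revokeUnitStep Prd) (∅, ∅)).1 (inst.foldl (revokeUnitStep Prd) (∅, ∅)).2 r from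
    ⟨_, h⟩
  induction inst using List.reverseRecOn with
  | nil => exact ⟨id, by simp [Feasible], by simp [IsRootMap], by simp⟩
  | append_singleton l I ih =>
    obtain ⟨r, hr⟩ := ih
    have hA : (l ++ [I]).toFinset = insert I l.toFinset := by
      ext J
      simp
    rw [List.foldl_append, hA]
    exact hr.exists_revokeUnitStep hopt I

/-- The wrongly predicted roots of the solution `S`, i.e. the false positives among the roots of its
marked intervals. -/
def falseRoots (opt S M : Finset Ivl) (r : Ivl → Ivl) : Finset Ivl :=
  {m ∈ S | m ∈ M ∧ r m ∉ opt}.image r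

theorem card_filter_exists_conflict_le (T F : Finset Ivl) :
    {J ∈ T | ∃ x ∈ F, Conflict J x}.card ≤ ∑ x ∈ F, {J ∈ T | Conflict J x}.card := by
  refine le_trans (Finset.card_le_card fun J hJ => ?_) Finset.card_biUnion_le
  obtain ⟨hJ, x, hx, hJx⟩ := Finset.mem_filter.1 hJ
  exact Finset.mem_biUnion.2 ⟨x, hx, Finset.mem_filter.2 ⟨hJ, hJx⟩⟩

theorem card_add_card_falseRoots_le {opt S M T : Finset Ivl} {r : Ivl → Ivl} (hT : Feasible T)
    (hroot : ∀ m ∈ M, m.occ ⊆ (r m).occ) (hcov : ∀ J ∈ T, ∃ K ∈ S, Covers opt M r K J) :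
    T.card + (falseRoots opt S M r).card ≤
      S.card + ∑ x ∈ falseRoots opt S M r, {J ∈ T | Conflict J x}.card := by
  set F := falseRoots opt S M r
  set Q := {m ∈ S | m ∈ M ∧ r m ∉ opt}
  have hrF {m : Ivl} (hm : m ∈ Q) : r m ∈ F := Finset.mem_image_of_mem r hm
  have hconflict := card_filter_exists_conflict_le T F
  have hfree : {J ∈ T | ¬ ∃ x ∈ F, Conflict J x}.card ≤ (S \ Q).card := by
    refine (hT.mono (Finset.filter_subset _ _)).card_le_card_of_forall_exists_subset fun J hJ => ?_
    obtain ⟨hJ, hJF⟩ := Finset.mem_filter.1 hJ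
    obtain ⟨K, hK, hKJ | ⟨hKM, hro, hJr⟩⟩ := hcov J hJ
    · refine ⟨K, Finset.mem_sdiff.2 ⟨hK, fun hKQ => hJF ⟨r K, hrF hKQ, ?_⟩⟩, hKJ⟩
      exact (Conflict.refl K).mono hKJ (hroot K (Finset.mem_filter.1 hKQ).2.1)
    · exact absurd ⟨r K, hrF (Finset.mem_filter.2 ⟨hK, hKM, hro⟩), hJr⟩ hJF
  have hsplit := Finset.card_filter_add_card_filter_not (s := T) (fun J => ∃ x ∈ F, Conflict J x)
  have hSQ : (S \ Q).card + Q.card = S.card :=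
    Finset.card_sdiff_add_card_eq_card (Finset.filter_subset _ _)
  have hFQ : F.card ≤ Q.card := Finset.card_image_le
  omega

namespace RevokeInvariant

variable {opt : Finset Ivl} {Prd : Ivl → Bool} {A S M : Finset Ivl} {r : Ivl → Ivl}

theorem of_mem_falseRoots {x : Ivl} (h : RevokeInvariant opt Prd A S M r)
    (hx : x ∈ falseRoots opt S M r) : x ∈ A ∧ x ∉ opt ∧ Prd x = true := by
  obtain ⟨m, hm, rfl⟩ := Finset.mem_image.1 hx
  obtain ⟨-, hmM, hro⟩ := Finset.mem_filter.1 hm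
  obtain ⟨hrA, -, hp⟩ := h.isRootMap m hmM
  exact ⟨hrA, hro, hp⟩

theorem card_opt_add_card_falseRoots_le (hopt : Feasible opt) (h : RevokeInvariant opt Prd A S M r)
    (hA : opt ⊆ A) :
    opt.card + (falseRoots opt S M r).card ≤ S.card + {J ∈ opt | ¬ Prd J = true}.card +
      ∑ x ∈ falseRoots opt S M r, {J ∈ opt | Conflict J x}.card := by
  set T := {J ∈ opt | Prd J = true}
  have hTopt : T ⊆ opt := Finset.filter_subset _ opt
  have hsplit : T.card + {J ∈ opt | ¬ Prd J = true}.card = opt.card :=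
    Finset.card_filter_add_card_filter_not _
  have hT := card_add_card_falseRoots_le (hopt.mono hTopt) (fun m hm => (h.isRootMap m hm).2.1)
    fun J hJ => h.covered J (hA (hTopt hJ)) (hTopt hJ) (Finset.mem_filter.1 hJ).2
  have hconflict : ∑ x ∈ falseRoots opt S M r, {J ∈ T | Conflict J x}.card ≤
      ∑ x ∈ falseRoots opt S M r, {J ∈ opt | Conflict J x}.card :=
    Finset.sum_le_sum fun x _ => Finset.card_le_card (Finset.filter_subset_filter _ hTopt)
  omega

end RevokeInvariant

theorem err_of_false_negative {w : Ivl → ℝ} {opt : Finset Ivl} {Prd : Ivl → Bool} {I : Ivl}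
    (hI : I ∈ opt) (hp : ¬ Prd I = true) : err w opt Prd I = w I := by
  simp [err, hI, hp]

theorem err_of_false_positive {w : Ivl → ℝ} {opt : Finset Ivl} {Prd : Ivl → Bool} {I : Ivl}
    (hI : I ∉ opt) (hp : Prd I = true) :
    err w opt Prd I = (∑ J ∈ opt with Conflict J I, w J) - w I := by
  simp [err, hI, hp]

theorem err_one_nonneg {opt : Finset Ivl} {I : Ivl} (Prd : Ivl → Bool)
    (hI : I ∉ opt → ∃ J ∈ opt, Conflict J I) : 0 ≤ err (fun _ => 1) opt Prd I := by
  unfold err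
  split_ifs with hacc hIo
  · exact le_rfl
  · exact zero_le_one
  · obtain ⟨J, hJ, hJI⟩ := hI hIo
    have hpos : 0 < {J ∈ opt | Conflict J I}.card :=
      Finset.card_pos.2 ⟨J, Finset.mem_filter.2 ⟨hJ, hJI⟩⟩
    rw [Finset.sum_const, nsmul_one, sub_nonneg, Nat.one_le_cast]
    exact hpos

theorem sum_err_le_totalErr {w : Ivl → ℝ} {opt : Finset Ivl} {Prd : Ivl → Bool} {inst : List Ivl}
    {A : Finset Ivl} (hA : A ⊆ inst.toFinset) (hpos : ∀ I ∈ inst, 0 ≤ err w opt Prd I) :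
    ∑ I ∈ A, err w opt Prd I ≤ totalErr w opt Prd inst := by
  have hpos' : ∀ I ∈ inst.toFinset, 0 ≤ err w opt Prd I := fun I hI =>
    hpos I (List.mem_toFinset.1 hI)
  rw [totalErr, Finset.sum_list_map_count]
  refine (Finset.sum_le_sum_of_subset_of_nonneg hA fun I hI _ => hpos' I hI).trans
    (Finset.sum_le_sum fun I hI => ?_)
  exact le_smul_of_one_le_left (hpos' I hI) (List.one_le_count_iff.2 (List.mem_toFinset.1 hI))

theorem card_add_sum_card_le_totalErr_one_add_card {opt F : Finset Ivl} {Prd : Ivl → Bool}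
    {inst : List Ivl} (hopt : opt ⊆ inst.toFinset) (hF : F ⊆ inst.toFinset)
    (hfp : ∀ x ∈ F, x ∉ opt ∧ Prd x = true)
    (hpos : ∀ I ∈ inst, 0 ≤ err (fun _ => 1) opt Prd I) :
    ({J ∈ opt | ¬ Prd J = true}.card : ℝ) + ∑ x ∈ F, ({J ∈ opt | Conflict J x}.card : ℝ) ≤
      totalErr (fun _ => 1) opt Prd inst + F.card := by
  set N := {J ∈ opt | ¬ Prd J = true}
  have hNF : Disjoint N F := Finset.disjoint_left.2 fun x hxN hxF =>
    (hfp x hxF).1 (Finset.mem_filter.1 hxN).1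
  have hNerr : ∑ x ∈ N, err (fun _ => 1) opt Prd x = N.card := by
    rw [Finset.sum_congr rfl fun x hx =>
      err_of_false_negative (Finset.mem_filter.1 hx).1 (Finset.mem_filter.1 hx).2,
      Finset.sum_const, nsmul_one]
  have hFerr : ∑ x ∈ F, err (fun _ => 1) opt Prd x =
      ∑ x ∈ F, ({J ∈ opt | Conflict J x}.card : ℝ) - F.card := by
    rw [Finset.sum_congr rfl fun x hx => err_of_false_positive (hfp x hx).1 (hfp x hx).2]
    simp
  have htotal : ∑ x ∈ N ∪ F, err (fun _ => 1) opt Prd x ≤ totalErr (fun _ => 1) opt Prd inst :=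
    sum_err_le_totalErr (Finset.union_subset ((Finset.filter_subset _ opt).trans hopt) hF) hpos
  rw [Finset.sum_union hNF, hNerr, hFerr] at htotal
  linarith

theorem exists_conflict_of_maximal {inst : List Ivl} {opt : Finset Ivl} {I : Ivl}
    (hopt : Maximal (fun T : Finset Ivl => (∀ J ∈ T, J ∈ inst) ∧ Feasible T) opt)
    (hI : I ∈ inst) (hIo : I ∉ opt) : ∃ J ∈ opt, Conflict J I := by
  by_contra! hno
  refine hIo (hopt.le_of_ge (y := insert I opt) ⟨?_, ?_⟩ (Finset.subset_insert I opt)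
    (Finset.mem_insert_self I opt))
  · exact (Finset.forall_mem_insert _ _ _).2 ⟨hI, hopt.prop.1⟩
  · exact hopt.prop.2.insert fun J hJ hIJ => hno J hJ hIJ.symm

theorem IsMaxCardOpt.maximal {inst : List Ivl} {opt : Finset Ivl} (h : IsMaxCardOpt inst opt) :
    Maximal (fun T : Finset Ivl => (∀ J ∈ T, J ∈ inst) ∧ Feasible T) opt :=
  ⟨⟨h.1, h.2.1⟩, fun T hT hle => (Finset.eq_of_subset_of_card_le hle (h.2.2 T hT.1 hT.2)).ge⟩

theorem revokeUnit_performance_general (inst : List Ivl) (Prd : Ivl → Bool) (opt : Finset Ivl)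
    (hopt : Maximal (fun T : Finset Ivl => (∀ I ∈ T, I ∈ inst) ∧ Feasible T) opt) :
    ((revokeUnit Prd inst).card : ℝ) ≥
      (opt.card : ℝ) - totalErr (fun _ => 1) opt Prd inst := by
  obtain ⟨hinst, hfeas⟩ := hopt.prop
  have hsub : opt ⊆ inst.toFinset := fun J hJ => List.mem_toFinset.2 (hinst J hJ)
  obtain ⟨M, r, h⟩ := exists_revokeInvariant hfeas Prd inst
  have hcard := h.card_opt_add_card_falseRoots_le hfeas hsub
  have herr := card_add_sum_card_le_totalErr_one_add_card hsub
    (fun x hx => (h.of_mem_falseRoots hx).1) (fun x hx => (h.of_mem_falseRoots hx).2)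
    fun I hI => err_one_nonneg Prd (exists_conflict_of_maximal hopt hI)
  rify at hcard
  linarith

theorem revokeUnit_performance
    (inst : List Ivl) (hdist : inst.Nodup) (Prd : Ivl → Bool)
    (opt : Finset Ivl) (hopt : IsMaxCardOpt inst opt) :
    ((revokeUnit Prd inst).card : ℝ) ≥
      (opt.card : ℝ) - totalErr (fun _ => 1) opt Prd inst :=
  revokeUnit_performance_general inst Prd opt hopt.maximal
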